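/- Let g be a Lie algebra over a field k and let N : g → g be a Nijenhuis operator. Then for all natural numbers k, l ≥ 0: (1) N^l is a Nijenhuis operator on the deformed Lie algebra (g, [·,·]^{N^k}), i.e. [N^l x, N^l y]^{N^k} = N^l([N^l x, y]^{N^k} + [x, N^l y]^{N^k} − N^l[x, y]^{N^k}) for all x, y; and (2) the twice-deformed bracket ([·,·]^{N^k})^{N^l} coincides with [·,·]^{N^{k+l}}. -/

import Mathlib

/-!
The torsion-type expression
`T j k x y = ⁅N^j x, N^k y⁆ - N^j ⁅x, N^k y⁆ - N^k ⁅N^j x, y⁆ + N^(j+k) ⁅x, y⁆`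
satisfies a cocycle rule in each exponent: `T (j+1) k x y = T j k (N x) y + N^j (T 1 k x y)`,
and symmetrically in `k`.
For a Nijenhuis operator `T 1 1 = 0`, so induction on both exponents gives `T j k = 0` for all
`j, k` (`lie_pow_pow`). The coincidence of the brackets is `T l a = T a l = 0`. It rewrites the
right-hand side of the Nijenhuis identity as `N^l` of the bracket deformed by `N^(a+l)`, and
that identity then follows from the vanishing of `T (a+l) l`, `T l (a+l)` and `T l l`.
-/

/-- `N` is a Nijenhuis operator on the Lie algebra `g`. -/
def IsNijenhuis {K : Type*} [Field K] {g : Type*} [LieRing g] [LieAlgebra K g]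
    (N : g →ₗ[K] g) : Prop :=
  ∀ x y : g, ⁅N x, N y⁆ = N (⁅N x, y⁆ + ⁅x, N y⁆ - N ⁅x, y⁆)

/-- The bracket deformed by a linear map `T`: `[x, y]^T = [T x, y] + [x, T y] - T [x, y]`. -/
def nijBracket {K : Type*} [Field K] {g : Type*} [LieRing g] [LieAlgebra K g]
    (T : g →ₗ[K] g) (x y : g) : g :=
  ⁅T x, y⁆ + ⁅x, T y⁆ - T ⁅x, y⁆

/-- An arbitrary bracket `br` deformed by a linear map `T`. -/
def deformBr {K : Type*} [Field K] {g : Type*} [AddCommGroup g] [Module K g]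
    (br : g → g → g) (T : g →ₗ[K] g) (x y : g) : g :=
  br (T x) y + br x (T y) - T (br x y)

section

variable {K : Type*} [Field K] {g : Type*} [LieRing g] [LieAlgebra K g]

lemma pow_apply_pow_apply (N : g →ₗ[K] g) (i j : ℕ) (z : g) :
    (N ^ i) ((N ^ j) z) = (N ^ (i + j)) z := by
  rw [pow_add, Module.End.mul_apply]

lemma pow_apply_apply (N : g →ₗ[K] g) (i : ℕ) (z : g) :
    (N ^ i) (N z) = (N ^ (i + 1)) z := by
  rw [pow_succ, Module.End.mul_apply]

/-- The induction on the second exponent, with the first exponent equal to one. -/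
lemma lie_apply_pow (N : g →ₗ[K] g) (hN : IsNijenhuis N) (k : ℕ) (x y : g) :
    ⁅N x, (N ^ k) y⁆ = N ⁅x, (N ^ k) y⁆ + (N ^ k) ⁅N x, y⁆ - (N ^ (k + 1)) ⁅x, y⁆ := by
  induction k generalizing y with
  | zero => simp
  | succ k ih =>
    have h1 := ih (N y)
    have h2 := congrArg (N ^ k) (hN x y)
    simp only [map_add, map_sub, pow_apply_apply] at h1 h2
    rw [h1, h2]
    abel

/-- The Nijenhuis identity for a pair of different powers of `N`. -/
lemma lie_pow_pow (N : g →ₗ[K] g) (hN : IsNijenhuis N) (j k : ℕ) (x y : g) :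
    ⁅(N ^ j) x, (N ^ k) y⁆ =
      (N ^ j) ⁅x, (N ^ k) y⁆ + (N ^ k) ⁅(N ^ j) x, y⁆ - (N ^ (j + k)) ⁅x, y⁆ := by
  induction j generalizing x with
  | zero => simp
  | succ j ih =>
    have h1 := ih (N x)
    have h2 := congrArg (N ^ j) (lie_apply_pow N hN k x y)
    simp only [map_add, map_sub, pow_apply_apply, pow_apply_pow_apply] at h1 h2
    rw [h1, h2, show j + 1 + k = j + (k + 1) by omega]
    abel

lemma deformBr_nijBracket_pow (N : g →ₗ[K] g) (hN : IsNijenhuis N) (a l : ℕ) (x y : g) :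
    deformBr (nijBracket (N ^ a)) (N ^ l) x y = nijBracket (N ^ (a + l)) x y := by
  simp only [deformBr, nijBracket, map_add, map_sub, pow_apply_pow_apply]
  rw [lie_pow_pow N hN l a, lie_pow_pow N hN a l, add_comm l a]
  abel

end

/-- For a Nijenhuis operator `N` on a Lie algebra `g` and naturals `a, l`:
(1) `N ^ l` is a Nijenhuis operator on the deformed Lie algebra `(g, [·,·]^{N^a})`;
(2) the twice-deformed bracket `([·,·]^{N^a})^{N^l}` coincides with `[·,·]^{N^{a+l}}`. -/
theorem pow_nijenhuis_deformed {K : Type*} [Field K] {g : Type*} [LieRing g] [LieAlgebra K g]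
    (N : g →ₗ[K] g) (hN : IsNijenhuis N) (a l : ℕ) :
    (∀ x y : g,
      nijBracket (N ^ a) ((N ^ l) x) ((N ^ l) y) =
        (N ^ l) (nijBracket (N ^ a) ((N ^ l) x) y + nijBracket (N ^ a) x ((N ^ l) y) -
          (N ^ l) (nijBracket (N ^ a) x y))) ∧
    (∀ x y : g,
      deformBr (nijBracket (N ^ a)) (N ^ l) x y = nijBracket (N ^ (a + l)) x y) := by
  refine ⟨fun x y => ?_, deformBr_nijBracket_pow N hN a l⟩
  have h := deformBr_nijBracket_pow N hN a l x y
  rw [deformBr] at h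
  rw [h]
  simp only [nijBracket, map_add, map_sub, pow_apply_pow_apply]
  rw [lie_pow_pow N hN (a + l) l, lie_pow_pow N hN l (a + l), lie_pow_pow N hN l l]
  simp only [map_add, map_sub, pow_apply_pow_apply]
  rw [show a + l + l = l + (a + l) by omega, show a + (l + l) = l + (a + l) by omega]
  abel
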